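/- Let r ∈ (1,∞), r̂ := min(r,2), δ ≥ 0 and X > 0, and set N := (δ^r + X^r)^((r̂−2)/r) · X^(r+1−r̂). Then there exists a constant C > 0 depending only on r such that X ≤ C·( N^(1/(r−1)) + (δ^(2−r̂)·N)^(1/(r+1−r̂)) ). -/

import Mathlib

open Real

/-!
Up to a factor `2`, the sum `δ ^ p + X ^ p` is `max δ X ^ p`. If `δ ≤ X`, then
`N = (δ ^ p + X ^ p) ^ (-a / p) * X ^ b` therefore dominates `X ^ (b - a)`; if `X ≤ δ`, then
`δ ^ a * N` dominates `X ^ b`. In each regime, taking a root bounds `X` by one of the two summands.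
-/

section

variable {p a b δ X : ℝ}

lemma rpow_neg_le_two_rpow_mul_add_rpow {M : ℝ} (hp : 0 < p) (ha : 0 ≤ a) (hδ : 0 ≤ δ)
    (hX : 0 < X) (hδM : δ ≤ M) (hXM : X ≤ M) :
    M ^ (-a) ≤ 2 ^ (a / p) * (δ ^ p + X ^ p) ^ (-a / p) := by
  have hM : 0 < M := hX.trans_le hXM
  have sum_le : δ ^ p + X ^ p ≤ 2 * M ^ p := by
    rw [two_mul]
    gcongr
  have exponent_nonpos : -a / p ≤ 0 := div_nonpos_of_nonpos_of_nonneg (neg_nonpos.2 ha) hp.le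
  calc
    M ^ (-a) = 2 ^ (a / p) * (2 * M ^ p) ^ (-a / p) := by
      rw [mul_rpow zero_le_two (by positivity), ← rpow_mul hM.le, mul_div_cancel₀ _ hp.ne',
        ← mul_assoc, ← rpow_add zero_lt_two, neg_div, add_neg_cancel, rpow_zero, one_mul]
    _ ≤ 2 ^ (a / p) * (δ ^ p + X ^ p) ^ (-a / p) := by
      gcongr 2 ^ (a / p) * ?_
      exact rpow_le_rpow_of_nonpos (by positivity) sum_le exponent_nonpos

lemma rpow_sub_le_two_rpow_mul_of_le (hp : 0 < p) (ha : 0 ≤ a) (hδ : 0 ≤ δ) (hX : 0 < X)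
    (hδX : δ ≤ X) :
    X ^ (b - a) ≤ 2 ^ (a / p) * ((δ ^ p + X ^ p) ^ (-a / p) * X ^ b) := by
  calc
    X ^ (b - a) = X ^ (-a) * X ^ b := by rw [← rpow_add hX, neg_add_eq_sub]
    _ ≤ 2 ^ (a / p) * (δ ^ p + X ^ p) ^ (-a / p) * X ^ b := by
      gcongr
      exact rpow_neg_le_two_rpow_mul_add_rpow hp ha hδ hX hδX le_rfl
    _ = 2 ^ (a / p) * ((δ ^ p + X ^ p) ^ (-a / p) * X ^ b) := mul_assoc _ _ _

lemma rpow_le_two_rpow_mul_of_le (hp : 0 < p) (ha : 0 ≤ a) (hX : 0 < X) (hXδ : X ≤ δ) :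
    X ^ b ≤ 2 ^ (a / p) * (δ ^ a * ((δ ^ p + X ^ p) ^ (-a / p) * X ^ b)) := by
  have hδ : 0 < δ := hX.trans_le hXδ
  calc
    X ^ b = δ ^ a * δ ^ (-a) * X ^ b := by
      rw [← rpow_add hδ, add_neg_cancel, rpow_zero, one_mul]
    _ ≤ δ ^ a * (2 ^ (a / p) * (δ ^ p + X ^ p) ^ (-a / p)) * X ^ b := by
      gcongr
      exact rpow_neg_le_two_rpow_mul_add_rpow hp ha hδ.le hX le_rfl hXδ
    _ = 2 ^ (a / p) * (δ ^ a * ((δ ^ p + X ^ p) ^ (-a / p) * X ^ b)) := by ring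

end

lemma le_rpow_div_mul_rpow_one_div {x y c k q : ℝ} (hx : 0 ≤ x) (hy : 0 ≤ y) (hc : 0 ≤ c)
    (hq : 0 < q) (h : x ^ q ≤ c ^ k * y) :
    x ≤ c ^ (k / q) * y ^ (1 / q) := by
  calc
    x ≤ (c ^ k * y) ^ (1 / q) := by
      rw [one_div]
      exact (le_rpow_inv_iff_of_pos hx (by positivity) hq).2 h
    _ = c ^ (k / q) * y ^ (1 / q) := by
      rw [mul_rpow (by positivity) hy, ← rpow_mul hc, mul_one_div]

theorem stmt11_general {p a b δ X : ℝ} (hp : 0 < p) (ha : 0 ≤ a) (hab : a < b) (hδ : 0 ≤ δ)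
    (hX : 0 < X) :
    X ≤ 2 ^ (a / p / (b - a)) *
      (((δ ^ p + X ^ p) ^ (-a / p) * X ^ b) ^ (1 / (b - a)) +
        (δ ^ a * ((δ ^ p + X ^ p) ^ (-a / p) * X ^ b)) ^ (1 / b)) := by
  have hb : 0 < b := ha.trans_lt hab
  have hba : 0 < b - a := sub_pos.2 hab
  set N := (δ ^ p + X ^ p) ^ (-a / p) * X ^ b
  have hN : 0 ≤ N := by positivity
  rcases le_total δ X with hδX | hXδ
  · calc
      X ≤ 2 ^ (a / p / (b - a)) * N ^ (1 / (b - a)) :=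
        le_rpow_div_mul_rpow_one_div hX.le hN zero_le_two hba
          (rpow_sub_le_two_rpow_mul_of_le hp ha hδ hX hδX)
      _ ≤ 2 ^ (a / p / (b - a)) * (N ^ (1 / (b - a)) + (δ ^ a * N) ^ (1 / b)) := by
        gcongr
        exact le_add_of_nonneg_right (by positivity)
  · calc
      X ≤ 2 ^ (a / p / b) * (δ ^ a * N) ^ (1 / b) :=
        le_rpow_div_mul_rpow_one_div hX.le (by positivity) zero_le_two hb
          (rpow_le_two_rpow_mul_of_le hp ha hX hXδ)
      _ ≤ 2 ^ (a / p / (b - a)) * (N ^ (1 / (b - a)) + (δ ^ a * N) ^ (1 / b)) := by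
        gcongr
        · exact one_le_two
        · exact sub_le_self b ha
        · exact le_add_of_nonneg_left (by positivity)

/-- Elementary algebraic bound (Remark 2.7 / Theorem 4.3): with
`N = (δ^r + X^r)^((r̂-2)/r) X^(r+1-r̂)` and `r̂ = min r 2`, one has
`X ≤ C (N^(1/(r-1)) + (δ^(2-r̂) N)^(1/(r+1-r̂)))` with `C > 0` depending only on
`r`. -/
theorem stmt11 (r : ℝ) (hr : 1 < r) :
    ∃ C : ℝ, 0 < C ∧
      ∀ δ X : ℝ, 0 ≤ δ → 0 < X →
        X ≤ C *
          (((δ ^ r + X ^ r) ^ ((min r 2 - 2) / r) * X ^ (r + 1 - min r 2)) ^ (1 / (r - 1)) +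
            (δ ^ (2 - min r 2) *
              ((δ ^ r + X ^ r) ^ ((min r 2 - 2) / r) * X ^ (r + 1 - min r 2))) ^
                (1 / (r + 1 - min r 2))) := by
  refine ⟨2 ^ ((2 - min r 2) / r / (r - 1)), by positivity, fun δ X hδ hX => ?_⟩
  have key := stmt11_general (p := r) (a := 2 - min r 2) (b := r + 1 - min r 2) (by linarith)
    (sub_nonneg.2 (min_le_right r 2)) (by linarith) hδ hX
  rwa [neg_sub, show r + 1 - min r 2 - (2 - min r 2) = r - 1 by ring] at key
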